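/- Let n ≥ 1 be an integer, q ∈ (0,1), and let M, j be integers with 1 ≤ M < j ≤ n. Under the Mallows distribution P_n^q on S_n, the probability that the maximum of the first j−1 values equals the maximum of the first M values is P_n^q(max(σ_1,…,σ_{j−1}) = max(σ_1,…,σ_M)) = q^{j−1−M} (1 − q^M)/(1 − q^{j−1}). -/

import Mathlib

open Finset Filter

/-- The number of inversions of a permutation of `Fin n`. -/
def invCount (n : ℕ) (σ : Equiv.Perm (Fin n)) : ℕ :=
  (Finset.univ.filter (fun p : Fin n × Fin n => p.1 < p.2 ∧ σ p.2 < σ p.1)).card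

/-- Normalization constant of the Mallows distribution:
`Z_n(q) = ∑_{σ ∈ S_n} q^{inv σ}`. -/
noncomputable def mallowsZ (n : ℕ) (q : ℝ) : ℝ :=
  ∑ σ : Equiv.Perm (Fin n), q ^ invCount n σ

/-- The Mallows probability of a set `A` of permutations:
`P_n^q(A) = (∑_{σ ∈ A} q^{inv σ}) / Z_n(q)`. -/
noncomputable def mallowsProb (n : ℕ) (q : ℝ) (A : Finset (Equiv.Perm (Fin n))) : ℝ :=
  (∑ σ ∈ A, q ^ invCount n σ) / mallowsZ n q

/-- The success event for the strategy `S(n,M)`.  Positions are indexed by `Fin n`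
(the index `i : Fin n` represents the `(i+1)`-st arriving item) and ranks are the
values of `σ` (the value `n-1`, i.e. the top of `Fin n`, represents the highest
rank `n`).  For `M ≥ 1` the strategy succeeds iff for some position `j` with
`(j:ℕ) ≥ M` (i.e. item number `j+1 ≥ M+1`) the item at position `j` has the top
rank and the maximum rank among the items strictly before position `j` equals the
maximum rank among the first `M` items.  For `M = 0` it succeeds iff the first
item has top rank. -/
def winEvent (n M : ℕ) : Finset (Equiv.Perm (Fin n)) :=
  if M = 0 then
    Finset.univ.filter (fun σ => ∀ i : Fin n, (i : ℕ) = 0 → (σ i : ℕ) = n - 1)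
  else
    Finset.univ.filter (fun σ => ∃ j : Fin n, M ≤ (j : ℕ) ∧ (σ j : ℕ) = n - 1 ∧
      (Finset.univ.filter (fun i : Fin n => i < j)).sup (fun i => (σ i : ℕ)) =
      (Finset.univ.filter (fun i : Fin n => (i : ℕ) < M)).sup (fun i => (σ i : ℕ)))

/-- `𝒫_n^q(S(n,M))`, the success probability of the strategy `S(n,M)` under the
Mallows distribution with parameter `q`. -/
noncomputable def succProb (n M : ℕ) (q : ℝ) : ℝ := mallowsProb n q (winEvent n M)

/-!
Let `m = j - 1`. Swapping adjacent positions `k`, `k + 1` moves the maximum of the first `m` values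
from position `k` to position `k + 1` and removes exactly one inversion. Hence, under the Mallows
weight, position `k < m` carries that maximum with probability proportional to `q ^ (m - 1 - k)`,
and the event says that `k < M`, so its probability is a quotient of two geometric sums.
-/

lemma sup_eq_sup_iff_exists_forall_le {ι α : Type*} [LinearOrder α] [OrderBot α]
    {s t : Finset ι} {f : ι → α} (hst : s ⊆ t) (hs : s.Nonempty) :
    t.sup f = s.sup f ↔ ∃ a ∈ s, ∀ i ∈ t, f i ≤ f a := by
  constructor
  · intro h
    obtain ⟨a, ha, hsup⟩ := exists_mem_eq_sup s hs f
    exact ⟨a, ha, fun i hi => (le_sup hi).trans_eq (h.trans hsup)⟩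
  · rintro ⟨a, ha, hle⟩
    exact le_antisymm (Finset.sup_le fun i hi => (hle i hi).trans (le_sup ha)) (sup_mono hst)

lemma geom_sum_div_geom_sum {K : Type*} [DivisionRing K] {q : K} (hq : q ≠ 1) (a b : ℕ) :
    (∑ k ∈ range a, q ^ k) / ∑ k ∈ range b, q ^ k = (1 - q ^ a) / (1 - q ^ b) := by
  rw [geom_sum_eq hq, geom_sum_eq hq, div_div_div_cancel_right₀ (sub_ne_zero.mpr hq),
    ← neg_sub 1 (q ^ a), ← neg_sub 1 (q ^ b), neg_div_neg_eq]

lemma sum_range_pow_sub {R : Type*} [Semiring R] (q : R) {m M : ℕ} (hMm : M ≤ m) :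
    ∑ k ∈ range M, q ^ (m - 1 - k) = q ^ (m - M) * ∑ k ∈ range M, q ^ k := by
  rw [← sum_range_reflect, mul_sum]
  refine sum_congr rfl fun k hk => ?_
  have hk : k < M := mem_range.mp hk
  rw [← pow_add, show m - 1 - (M - 1 - k) = m - M + k by omega]

section Inversions

lemma swap_lt_swap_iff_of_covBy {α : Type*} [LinearOrder α] {a b x y : α} (hab : a ⋖ b)
    (hxy : (x, y) ≠ (a, b)) (hyx : (x, y) ≠ (b, a)) :
    Equiv.swap a b x < Equiv.swap a b y ↔ x < y := by
  have hlt : a < b := hab.lt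
  have hbetween : ∀ z, z ≤ a ∨ b ≤ z := fun z => (le_or_gt z a).imp_right hab.ge_of_gt
  have hx := hbetween x
  have hy := hbetween y
  grind

variable {n : ℕ} {σ : Equiv.Perm (Fin n)} {a b : Fin n}

/-- The inversion set of `σ`, whose cardinality is `invCount n σ`: pairs of positions whose values
are out of order. -/
def inversions (σ : Equiv.Perm (Fin n)) : Finset (Fin n × Fin n) :=
  univ.filter fun p => p.1 < p.2 ∧ σ p.2 < σ p.1

lemma mem_inversions {p : Fin n × Fin n} : p ∈ inversions σ ↔ p.1 < p.2 ∧ σ p.2 < σ p.1 :=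
  mem_filter_univ p

lemma card_inversions (σ : Equiv.Perm (Fin n)) : #(inversions σ) = invCount n σ :=
  rfl

lemma swap_mem_erase_inversions_mul_swap (hab : a ⋖ b) (hσ : σ a < σ b) (x y : Fin n) :
    (Equiv.swap a b x, Equiv.swap a b y) ∈ (inversions (σ * Equiv.swap a b)).erase (a, b) ↔
      (x, y) ∈ inversions σ := by
  simp only [mem_erase, mem_inversions, Equiv.Perm.mul_apply, Equiv.swap_apply_self, ← and_assoc]
  refine and_congr_left fun hyx => ?_
  have hne : (x, y) ≠ (a, b) := by
    rintro ⟨⟩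
    exact hσ.not_gt hyx
  by_cases hba : (x, y) = (b, a)
  · obtain ⟨rfl, rfl⟩ := Prod.mk.inj hba
    simp [hab.lt.le]
  · have hswap_ne : (Equiv.swap a b x, Equiv.swap a b y) ≠ (a, b) := by
      simpa [Equiv.swap_apply_eq_iff] using hba
    rw [swap_lt_swap_iff_of_covBy hab hne hba, and_iff_right hswap_ne]

lemma invCount_mul_swap (hab : a ⋖ b) (hσ : σ a < σ b) :
    invCount n (σ * Equiv.swap a b) = invCount n σ + 1 := by
  have hmem : (a, b) ∈ inversions (σ * Equiv.swap a b) := by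
    simpa [mem_inversions] using ⟨hab.lt, hσ⟩
  rw [← card_inversions, ← card_inversions, ← card_erase_add_one hmem, add_left_inj]
  exact (card_equiv ((Equiv.swap a b).prodCongr (Equiv.swap a b)) fun ⟨x, y⟩ =>
    (swap_mem_erase_inversions_mul_swap hab hσ x y).symm).symm

lemma invCount_one (n : ℕ) : invCount n 1 = 0 :=
  card_eq_zero.mpr <| eq_empty_of_forall_notMem fun _ hp =>
    let ⟨hlt, hgt⟩ := mem_inversions.mp hp
    hlt.asymm hgt

end Inversions

lemma mallowsZ_pos (n : ℕ) {q : ℝ} (hq : 0 ≤ q) : 0 < mallowsZ n q :=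
  sum_pos' (fun _ _ => pow_nonneg hq _) ⟨1, mem_univ _, by simp [invCount_one]⟩

section PrefixMax

variable {n m M : ℕ} {a b : Fin n} {σ : Equiv.Perm (Fin n)}

/-- `max(σ_1, …, σ_m)`, with ranks counted from `0`; it is `0` for `m = 0`. -/
def prefixMax (σ : Equiv.Perm (Fin n)) (m : ℕ) : ℕ :=
  (univ.filter fun i : Fin n => (i : ℕ) < m).sup fun i => (σ i : ℕ)

/-- The event that the first `m` values are all at most the value at position `a`: for `a < m`,
that `a` is the position of their maximum. -/
def prefixArgmax (m : ℕ) (a : Fin n) : Finset (Equiv.Perm (Fin n)) :=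
  univ.filter fun σ => ∀ i : Fin n, (i : ℕ) < m → σ i ≤ σ a

lemma mem_prefixArgmax : σ ∈ prefixArgmax m a ↔ ∀ i : Fin n, (i : ℕ) < m → σ i ≤ σ a :=
  mem_filter_univ σ

lemma disjoint_prefixArgmax (ha : (a : ℕ) < m) (hb : (b : ℕ) < m) (hab : a ≠ b) :
    Disjoint (prefixArgmax m a) (prefixArgmax m b) :=
  disjoint_left.mpr fun σ hσa hσb => hab <| σ.injective <|
    le_antisymm (mem_prefixArgmax.mp hσb a ha) (mem_prefixArgmax.mp hσa b hb)

lemma filter_prefixMax_eq_biUnion (hM : 1 ≤ M) (hMm : M ≤ m) (hMn : M ≤ n) :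
    univ.filter (fun σ : Equiv.Perm (Fin n) => prefixMax σ m = prefixMax σ M) =
      univ.biUnion fun a : Fin M => prefixArgmax m (a.castLE hMn) := by
  ext σ
  have hsub : univ.filter (fun i : Fin n => (i : ℕ) < M) ⊆ univ.filter fun i => (i : ℕ) < m :=
    monotone_filter_right _ fun i _ hi => hi.trans_le hMm
  have hne : (univ.filter fun i : Fin n => (i : ℕ) < M).Nonempty :=
    ⟨⟨0, by omega⟩, (mem_filter_univ _).mpr hM⟩
  simp only [mem_filter_univ, prefixMax, sup_eq_sup_iff_exists_forall_le hsub hne, mem_biUnion,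
    mem_univ, true_and, mem_prefixArgmax, Fin.val_fin_le]
  exact ⟨fun ⟨a, ha, hle⟩ => ⟨⟨a, ha⟩, hle⟩, fun ⟨a, hle⟩ => ⟨a.castLE hMn, a.isLt, hle⟩⟩

lemma mul_swap_mem_prefixArgmax (ha : (a : ℕ) < m) (hb : (b : ℕ) < m) :
    σ * Equiv.swap a b ∈ prefixArgmax m a ↔ σ ∈ prefixArgmax m b := by
  have hmaps : ∀ i : Fin n, (i : ℕ) < m → (Equiv.swap a b i : ℕ) < m := by grind
  simp only [mem_prefixArgmax, Equiv.Perm.mul_apply, Equiv.swap_apply_left]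
  exact ⟨fun h i hi => by simpa using h _ (hmaps i hi), fun h i hi => h _ (hmaps i hi)⟩

variable {R : Type*} [Semiring R] (q : R)

lemma sum_prefixArgmax_of_covBy (hab : a ⋖ b) (hb : (b : ℕ) < m) :
    ∑ σ ∈ prefixArgmax m a, q ^ invCount n σ = q * ∑ σ ∈ prefixArgmax m b, q ^ invCount n σ := by
  have ha : (a : ℕ) < m := (Fin.lt_def.mp hab.lt).trans hb
  rw [mul_sum]
  refine (sum_equiv (Equiv.mulRight (Equiv.swap a b))
    (fun σ => (mul_swap_mem_prefixArgmax ha hb).symm) fun σ hσ => ?_).symm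
  have hlt : σ a < σ b :=
    (mem_prefixArgmax.mp hσ a ha).lt_of_ne (σ.injective.ne hab.lt.ne)
  rw [Equiv.coe_mulRight, invCount_mul_swap hab hlt, pow_succ']

lemma sum_prefixArgmax_of_le (hab : a ≤ b) (hb : (b : ℕ) < m) :
    ∑ σ ∈ prefixArgmax m a, q ^ invCount n σ =
      q ^ (b - a : ℕ) * ∑ σ ∈ prefixArgmax m b, q ^ invCount n σ := by
  obtain ⟨d, hd⟩ := Nat.exists_eq_add_of_le (Fin.le_def.mp hab)
  induction d generalizing a with
  | zero => simp [Fin.ext (hd : (b : ℕ) = a)]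
  | succ d ih =>
    let c : Fin n := ⟨a + 1, by omega⟩
    have hac : a ⋖ c := Fin.covBy_iff.mpr (Nat.covBy_iff_add_one_eq.mpr rfl)
    have hcd : (b : ℕ) = c + d := by simp only [c]; omega
    rw [sum_prefixArgmax_of_covBy q hac (by omega), ih (Fin.le_def.mpr (by omega)) hcd,
      ← mul_assoc, ← pow_succ', show (b - c : ℕ) + 1 = b - a by omega]

lemma sum_filter_prefixMax_eq (hM : 1 ≤ M) (hMm : M ≤ m) (hb : (b : ℕ) + 1 = m) :
    ∑ σ : Equiv.Perm (Fin n) with prefixMax σ m = prefixMax σ M, q ^ invCount n σ =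
      (q ^ (m - M) * ∑ k ∈ range M, q ^ k) * ∑ σ ∈ prefixArgmax m b, q ^ invCount n σ := by
  have hMn : M ≤ n := by omega
  have hlt : ∀ a : Fin M, (a.castLE hMn : ℕ) < m := fun a => a.isLt.trans_le hMm
  have hle : ∀ a : Fin M, a.castLE hMn ≤ b := fun a => Nat.le_of_lt_succ ((hlt a).trans_eq hb.symm)
  rw [filter_prefixMax_eq_biUnion hM hMm hMn, sum_biUnion fun a _ c _ hac =>
    disjoint_prefixArgmax (hlt a) (hlt c) ((Fin.castLE_injective hMn).ne hac)]
  calc ∑ a : Fin M, ∑ σ ∈ prefixArgmax m (a.castLE hMn), q ^ invCount n σ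
    _ = ∑ a : Fin M, q ^ (b - a : ℕ) * ∑ σ ∈ prefixArgmax m b, q ^ invCount n σ :=
      sum_congr rfl fun a _ => sum_prefixArgmax_of_le q (hle a) (by omega)
    _ = (∑ k ∈ range M, q ^ (m - 1 - k)) * ∑ σ ∈ prefixArgmax m b, q ^ invCount n σ := by
      rw [← sum_mul, Fin.sum_univ_eq_sum_range fun k => q ^ (b - k : ℕ), Nat.eq_sub_of_add_eq hb]
    _ = _ := by rw [sum_range_pow_sub q hMm]

end PrefixMax

theorem stmt_16_general {n m M : ℕ} {q : ℝ} (hZ : mallowsZ n q ≠ 0)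
    (hM : 1 ≤ M) (hMm : M ≤ m) (hmn : m ≤ n) :
    mallowsProb n q (univ.filter fun σ => prefixMax σ m = prefixMax σ M) =
      q ^ (m - M) * ((∑ k ∈ range M, q ^ k) / ∑ k ∈ range m, q ^ k) := by
  let b : Fin n := ⟨m - 1, by omega⟩
  have hb : (b : ℕ) + 1 = m := Nat.sub_add_cancel (hM.trans hMm)
  have hZ_eq : mallowsZ n q =
      (∑ k ∈ range m, q ^ k) * ∑ σ ∈ prefixArgmax m b, q ^ invCount n σ := by
    simpa [mallowsZ] using sum_filter_prefixMax_eq q (hM.trans hMm) le_rfl hb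
  rw [mallowsProb, sum_filter_prefixMax_eq q hM hMm hb, hZ_eq,
    mul_div_mul_right _ _ (right_ne_zero_of_mul (hZ_eq ▸ hZ)), mul_div_assoc]

theorem stmt_16 (n M j : ℕ) (q : ℝ) (hq : q ∈ Set.Ioo (0 : ℝ) 1)
    (hM : 1 ≤ M) (hMj : M < j) (hj : j ≤ n) :
    mallowsProb n q (Finset.univ.filter (fun σ : Equiv.Perm (Fin n) =>
        (Finset.univ.filter (fun i : Fin n => (i : ℕ) + 1 < j)).sup (fun i => (σ i : ℕ)) =
        (Finset.univ.filter (fun i : Fin n => (i : ℕ) < M)).sup (fun i => (σ i : ℕ)))) =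
      q ^ (j - 1 - M) * (1 - q ^ M) / (1 - q ^ (j - 1)) := by
  simp only [← Nat.lt_sub_iff_add_lt, mul_div_assoc, ← geom_sum_div_geom_sum hq.2.ne]
  exact stmt_16_general (mallowsZ_pos n hq.1.le).ne' hM (Nat.le_sub_one_of_lt hMj) (by omega)
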